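/- Let n ≥ 3, 0 ≤ δ < 1/2, and set α_δ = (n−2)δ/(1−2δ) and p = n + 2α_δ. Let α > α_δ and 0 < r₁ < r₂. For 0 < s < t write A(s,t) = {x ∈ ℝⁿ : s < |x| < t}. Let u be continuously differentiable with locally Lipschitz gradient on an open neighborhood of the closed annulus {x : r₁/2 ≤ |x| ≤ 2r₂}, and let S be a continuous map from that neighborhood to the symmetric n×n real matrices. Assume that for almost every x in A(r₁/2, 2r₂) (with respect to Lebesgue measure), ∇u is differentiable at x with derivative matrix H(x), and the following matrix condition holds at x: for every v ∈ ℝⁿ, (n−2)⟨H(x)v, v⟩ + (1−2δ)(tr H(x))|v|² + (n−2)⟨∇u(x), v⟩² − (n−2)(1−δ)|∇u(x)|²|v|² + ⟨S(x)v, v⟩ ≥ 0. Then there is a constant C > 0, depending only on n, δ, and (α − α_δ)⁻¹, such that ∫_{A(r₁,r₂)} |∇u|^{p} e^{αu} dx ≤ C·( ∫_{A(r₁/2, 2r₂)} ‖S(x)‖^{p/2} e^{αu} dx + r₁^{−p} ∫_{A(r₁/2, r₁)} e^{αu} dx + r₂^{−p} ∫_{A(r₂, 2r₂)} e^{αu}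 dx ), where ‖S(x)‖ denotes the operator norm of S(x). -/

import Mathlib

open MeasureTheory RealInnerProductSpace

/-!
The divergence theorem is applied to the compactly supported field `e^{αu} ηᵖ |∇u|ᵖ⁻² ∇u`, which is
only Lipschitz, so that its divergence exists almost everywhere. The exponent `p = n + 2α_δ` is the
one for which the matrix condition in the direction `v = ∇u`, divided by `1 - 2δ` and multiplied by
`|∇u|ᵖ⁻⁴`, becomes a lower bound for the `p`-Laplacian,
`div (|∇u|ᵖ⁻² ∇u) ≥ -(α_δ |∇u|ᵖ + (1 - 2δ)⁻¹ ‖S‖ |∇u|ᵖ⁻²)`.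
Differentiating the weight `e^{αu}` contributes `α |∇u|ᵖ`, and the surplus `α - α_δ` absorbs, by
Young's inequality, both the term with `S` and the one with the gradient of the cutoff `η`.
-/

lemma rpow_sub_mul_le_mul_add_rpow {a t p m ε : ℝ} (ha : 0 ≤ a) (ht : 0 ≤ t) (hm : 0 < m)
    (hmp : m ≤ p) (hε : 0 < ε) :
    a ^ (p - m) * t ≤ ε * (a ^ p + (t / ε) ^ (p / m)) := by
  have hp : 0 < p := hm.trans_le hmp
  have hs : 0 ≤ t / ε := by positivity
  have hw : 0 ≤ (p - m) / p := div_nonneg (sub_nonneg.2 hmp) hp.le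
  have hw1 : (p - m) / p + m / p = 1 := by field_simp; ring
  have amgm := Real.geom_mean_le_arith_mean2_weighted hw (div_nonneg hm.le hp.le)
    (Real.rpow_nonneg ha p) (Real.rpow_nonneg hs (p / m)) hw1
  rw [← Real.rpow_mul ha, ← Real.rpow_mul hs, mul_div_cancel₀ _ hp.ne',
    div_mul_div_cancel₀ hm.ne', div_self hp.ne', Real.rpow_one] at amgm
  calc a ^ (p - m) * t = ε * (a ^ (p - m) * (t / ε)) := by field_simp
    _ ≤ ε * ((p - m) / p * a ^ p + m / p * (t / ε) ^ (p / m)) := by gcongr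
    _ ≤ ε * (1 * a ^ p + 1 * (t / ε) ^ (p / m)) := by
      gcongr
      · exact div_le_one_of_le₀ (by linarith) hp.le
      · exact div_le_one_of_le₀ hmp hp.le
    _ = ε * (a ^ p + (t / ε) ^ (p / m)) := by simp only [one_mul]

section LocallyLipschitz

variable {X F : Type*}

lemma locallyLipschitzOn_comp {Y Z : Type*} [PseudoEMetricSpace X] [PseudoEMetricSpace Y]
    [PseudoEMetricSpace Z] {f : Y → Z} {g : X → Y} {s : Set X} (hf : LocallyLipschitz f)
    (hg : LocallyLipschitzOn s g) : LocallyLipschitzOn s (f ∘ g) :=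
  locallyLipschitzOn_iff_restrict.2 (hf.comp hg.restrict)

lemma locallyLipschitzOn_smul [PseudoEMetricSpace X] [NormedAddCommGroup F] [NormedSpace ℝ F]
    {f : X → ℝ} {g : X → F} {s : Set X} (hf : LocallyLipschitzOn s f)
    (hg : LocallyLipschitzOn s g) : LocallyLipschitzOn s fun x ↦ f x • g x := by
  have hsmul : LocallyLipschitz fun z : ℝ × F ↦ z.1 • z.2 :=
    (contDiff_smul (𝕜 := ℝ) (n := 1)).locallyLipschitz
  exact locallyLipschitzOn_iff_restrict.2 (hsmul.comp (hf.restrict.prodMk hg.restrict))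

lemma locallyLipschitz_of_tsupport_subset [PseudoEMetricSpace X] [PseudoEMetricSpace F] [Zero F]
    {f : X → F} {s : Set X} (hs : IsOpen s) (hf : LocallyLipschitzOn s f) (hsupp : tsupport f ⊆ s) :
    LocallyLipschitz f := by
  intro x
  by_cases hx : x ∈ s
  · simpa only [hs.nhdsWithin_eq hx] using hf hx
  · refine ⟨0, _, (isClosed_tsupport f).isOpen_compl.mem_nhds fun h ↦ hx (hsupp h), ?_⟩
    intro y hy z hz
    simp [image_eq_zero_of_notMem_tsupport hy, image_eq_zero_of_notMem_tsupport hz]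

lemma locallyLipschitzOn_of_hasFDerivAt {E : Type*} [NormedAddCommGroup E] [NormedSpace ℝ E]
    [NormedAddCommGroup F] [NormedSpace ℝ F] {f : E → F} {f' : E → E →L[ℝ] F} {s : Set E}
    (hs : IsOpen s) (hf : ∀ x ∈ s, HasFDerivAt f (f' x) x) (hf' : ContinuousOn f' s) :
    LocallyLipschitzOn s f := by
  intro x hx
  have hfx : ContDiffAt ℝ 1 f x := contDiffAt_one_iff.2 ⟨f', s, hs.mem_nhds hx, hf', hf⟩
  rw [hs.nhdsWithin_eq hx]
  exact hfx.exists_lipschitzOnWith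

lemma exists_lipschitzWith_of_hasCompactSupport [PseudoMetricSpace X] [ProperSpace X]
    [NormedAddCommGroup F] {f : X → F} (hf : LocallyLipschitz f)
    (hc : HasCompactSupport f) : ∃ K, LipschitzWith K f := by
  obtain ⟨M, hM⟩ := hf.continuous.bounded_above_of_compact_support hc
  have hcompact : IsCompact (Metric.cthickening 1 (tsupport f)) := IsCompact.cthickening hc
  obtain ⟨K, hK⟩ := hf.locallyLipschitzOn.exists_lipschitzOnWith_of_compact hcompact
  have dist_le_of_mem (x y : X) (hx : x ∈ tsupport f) :
      dist (f x) (f y) ≤ (K + 2 * M) * dist x y := by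
    have hM₀ : 0 ≤ M := (norm_nonneg _).trans (hM x)
    rcases le_total (dist x y) 1 with hxy | hxy
    · have hy : y ∈ Metric.cthickening 1 (tsupport f) :=
        Metric.mem_cthickening_of_dist_le y x 1 _ hx (by rwa [dist_comm])
      calc dist (f x) (f y) ≤ K * dist x y :=
            hK.dist_le_mul x (Metric.self_subset_cthickening _ hx) y hy
        _ ≤ (K + 2 * M) * dist x y := by gcongr; linarith
    · calc dist (f x) (f y) ≤ M + M :=
            (dist_le_norm_add_norm _ _).trans (add_le_add (hM x) (hM y))
        _ ≤ (K + 2 * M) * 1 := by linarith [K.coe_nonneg]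
        _ ≤ (K + 2 * M) * dist x y := by gcongr
  refine ⟨_, LipschitzWith.of_dist_le' (K := K + 2 * M) fun x y ↦ ?_⟩
  by_cases hx : x ∈ tsupport f
  · exact dist_le_of_mem x y hx
  by_cases hy : y ∈ tsupport f
  · simpa only [dist_comm] using dist_le_of_mem y x hy
  have hM₀ : 0 ≤ M := (norm_nonneg _).trans (hM x)
  rw [image_eq_zero_of_notMem_tsupport hx, image_eq_zero_of_notMem_tsupport hy, dist_self]
  positivity

end LocallyLipschitz

section Divergence

variable {E : Type*} [NormedAddCommGroup E] [NormedSpace ℝ E]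

/-- The divergence of a vector field on a real normed space, as the trace of its derivative. It is
the junk value `0` at points where the field is not differentiable. -/
noncomputable def divergence (V : E → E) (x : E) : ℝ :=
  LinearMap.trace ℝ E (fderiv ℝ V x)

variable {V : E → E} {f : E → ℝ} {x : E}

lemma divergence_eq_zero_of_notMem_tsupport (hx : x ∉ tsupport V) : divergence V x = 0 := by
  have : fderiv ℝ V x = 0 := Function.notMem_support.1 fun h ↦ hx (support_fderiv_subset ℝ h)
  simp [divergence, this]

variable [FiniteDimensional ℝ E]

lemma divergence_smul {f' : E →L[ℝ] ℝ} (hf : HasFDerivAt f f' x) (hV : DifferentiableAt ℝ V x) :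
    divergence (fun y ↦ f y • V y) x = f x * divergence V x + f' (V x) := by
  simp [divergence, (hf.fun_smul hV.hasFDerivAt).fderiv]

lemma divergence_eq_sum_lineDeriv {ι : Type*} [Fintype ι] (b : Module.Basis ι ℝ E)
    (hV : DifferentiableAt ℝ V x) :
    divergence V x = ∑ i, lineDeriv ℝ (fun y ↦ b.coord i (V y)) x (b i) := by
  classical
  rw [divergence, LinearMap.trace_eq_matrix_trace ℝ b]
  refine Finset.sum_congr rfl fun i _ ↦ ?_
  have := ((b.coord i).toContinuousLinearMap.hasFDerivAt.comp x hV.hasFDerivAt).hasLineDerivAt (b i)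
  simpa [LinearMap.toMatrix_apply] using! this.lineDeriv.symm

variable [MeasurableSpace E] [BorelSpace E] {μ : Measure E} [μ.IsAddHaarMeasure] {K : NNReal}

lemma integrable_lineDeriv (hf : LipschitzWith K f) (hc : HasCompactSupport f) (v : E) :
    Integrable (fun x ↦ lineDeriv ℝ f x v) μ := by
  rw [← integrableOn_iff_integrable_of_support_subset (s := tsupport f)]
  · exact (hf.locallyIntegrable_lineDeriv v).integrableOn_isCompact hc
  · intro x hx
    contrapose! hx
    have : f =ᶠ[nhds x] fun _ ↦ 0 := notMem_tsupport_iff_eventuallyEq.1 hx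
    rw [Function.notMem_support, this.lineDeriv_eq]
    simp [lineDeriv]

lemma integral_lineDeriv_eq_zero (hf : LipschitzWith K f) (hc : HasCompactSupport f) (v : E) :
    ∫ x, lineDeriv ℝ f x v ∂μ = 0 := by
  simpa [lineDeriv] using!
    ((LipschitzWith.const (1 : ℝ)).integral_lineDeriv_mul_eq (μ := μ) hf hc (-v)).symm

theorem integrable_divergence_and_integral_eq_zero (hV : LipschitzWith K V)
    (hc : HasCompactSupport V) :
    Integrable (divergence V) μ ∧ ∫ x, divergence V x ∂μ = 0 := by
  let b := Module.finBasis ℝ E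
  have hlip i := (b.coord i).toContinuousLinearMap.lipschitz.comp hV
  have hsupp i : HasCompactSupport ((b.coord i).toContinuousLinearMap ∘ V) :=
    hc.comp_left (map_zero _)
  have hsum : divergence V =ᵐ[μ] fun x ↦ ∑ i, lineDeriv ℝ (fun y ↦ b.coord i (V y)) x (b i) :=
    hV.ae_differentiableAt.mono fun _ ↦ divergence_eq_sum_lineDeriv b
  have hint i : Integrable (fun x ↦ lineDeriv ℝ (fun y ↦ b.coord i (V y)) x (b i)) μ :=
    integrable_lineDeriv (hlip i) (hsupp i) (b i)
  refine ⟨(integrable_finsetSum _ fun i _ ↦ hint i).congr hsum.symm, ?_⟩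
  rw [integral_congr_ae hsum, integral_finsetSum _ fun i _ ↦ hint i]
  exact Finset.sum_eq_zero fun i _ ↦ integral_lineDeriv_eq_zero (hlip i) (hsupp i) (b i)

end Divergence

section PFlux

variable {E : Type*} [NormedAddCommGroup E] [InnerProductSpace ℝ E] {p : ℝ}

/-- The flux `|v|ᵖ⁻² v` of the `p`-Laplacian: `div (pFlux p ∘ ∇u)` is the `p`-Laplacian of `u`. -/
noncomputable def pFlux (p : ℝ) (v : E) : E := ‖v‖ ^ (p - 2) • v

lemma hasFDerivAt_pFlux (hp : 2 < p) (v : E) :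
    HasFDerivAt (pFlux p) (‖v‖ ^ (p - 2) • ContinuousLinearMap.id ℝ E +
      ((p - 2) * ‖v‖ ^ (p - 4)) • (innerSL ℝ v).smulRight v) v := by
  have hp' : 0 < p - 2 := sub_pos.2 hp
  rcases eq_or_ne v 0 with rfl | hv
  · have hrpow : (fun w : E ↦ ‖w‖ ^ (p - 2)) =o[nhds 0] fun _ ↦ (1 : ℝ) := by
      rw [Asymptotics.isLittleO_one_iff]
      simpa [ContinuousAt, Real.zero_rpow hp'.ne'] using
        (continuous_norm (E := E)).continuousAt (x := 0) |>.rpow_const (Or.inr hp'.le)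
    rw [hasFDerivAt_iff_isLittleO_nhds_zero]
    simpa [pFlux, Real.zero_rpow hp'.ne'] using!
      hrpow.smul_isBigO (Asymptotics.isBigO_refl (fun w : E ↦ w) (nhds 0))
  · have sq_rpow (w : E) (q : ℝ) : (‖w‖ ^ 2) ^ q = ‖w‖ ^ (2 * q) := by
      rw [Real.rpow_mul (norm_nonneg w), Real.rpow_two]
    have hpFlux : pFlux p = fun w : E ↦ (‖w‖ ^ 2) ^ ((p - 2) / 2) • w := by
      funext w
      rw [sq_rpow, mul_div_cancel₀ _ two_ne_zero, pFlux]
    rw [hpFlux]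
    have hbase : HasFDerivAt (fun w : E ↦ (‖w‖ ^ 2) ^ ((p - 2) / 2)) _ v :=
      (hasFDerivAt_id v).norm_sq.rpow_const (Or.inl (by positivity))
    refine (hbase.fun_smul (hasFDerivAt_id v)).congr_fderiv ?_
    ext w
    have h2 : 2 * ((p - 2) / 2) = p - 2 := by ring
    have h4 : 2 * ((p - 2) / 2 - 1) = p - 4 := by ring
    simp only [sq_rpow, h2, id_eq, h4, ContinuousLinearMap.comp_id, add_apply, smul_apply,
      ContinuousLinearMap.id_apply, ContinuousLinearMap.smulRight_apply, coe_innerSL_apply,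
      nsmul_eq_mul, Nat.cast_ofNat, smul_eq_mul, smul_smul, add_right_inj]
    ring_nf

lemma locallyLipschitz_pFlux (hp : 2 < p) : LocallyLipschitz (pFlux p : E → E) := by
  have hp' : 0 < p - 2 := sub_pos.2 hp
  intro x
  refine ⟨((p - 1) * (‖x‖ + 1) ^ (p - 2)).toNNReal, _, Metric.ball_mem_nhds x one_pos,
    (convex_ball x 1).lipschitzOnWith_of_nnnorm_hasFDerivWithin_le
      (fun v _ ↦ (hasFDerivAt_pFlux hp v).hasFDerivWithinAt) fun v hv ↦ ?_⟩
  have hvx : ‖v‖ ≤ ‖x‖ + 1 := by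
    linarith [norm_le_norm_add_norm_sub' v x, mem_ball_iff_norm.1 hv]
  have hsq : ‖v‖ ^ (p - 4) * (‖v‖ * ‖v‖) ≤ ‖v‖ ^ (p - 2) := by
    rcases eq_or_ne v 0 with rfl | hv0
    · simp [Real.zero_rpow hp'.ne']
    · rw [← sq, ← Real.rpow_two, ← Real.rpow_add (norm_pos_iff.2 hv0),
        show p - 4 + 2 = p - 2 by ring]
  rw [← NNReal.coe_le_coe, coe_nnnorm, Real.coe_toNNReal _
    (mul_nonneg (by linarith) (by positivity))]
  calc _ ≤ ‖v‖ ^ (p - 2) * 1 + (p - 2) * ‖v‖ ^ (p - 4) * (‖v‖ * ‖v‖) := by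
        refine (norm_add_le _ _).trans ?_
        rw [norm_smul, norm_smul, ContinuousLinearMap.norm_smulRight_apply, innerSL_apply_norm,
          Real.norm_of_nonneg (by positivity), Real.norm_of_nonneg (by positivity)]
        gcongr
        exact ContinuousLinearMap.norm_id_le
    _ ≤ ‖v‖ ^ (p - 2) * 1 + (p - 2) * ‖v‖ ^ (p - 2) := by
        rw [mul_assoc (p - 2)]; gcongr
    _ = (p - 1) * ‖v‖ ^ (p - 2) := by ring
    _ ≤ (p - 1) * (‖x‖ + 1) ^ (p - 2) := by gcongr; linarith

lemma norm_pFlux (hp : p ≠ 1) (v : E) : ‖pFlux p v‖ = ‖v‖ ^ (p - 1) := by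
  have hp' : p - 2 + 1 = p - 1 := by ring
  rw [pFlux, norm_smul, Real.norm_of_nonneg (by positivity), ← hp',
    Real.rpow_add_one' (norm_nonneg v) (by rwa [hp', sub_ne_zero])]

lemma inner_self_pFlux (hp : p ≠ 0) (v : E) : ⟪v, pFlux p v⟫ = ‖v‖ ^ p := by
  have hp' : p - 2 + (2 : ℕ) = p := by push_cast; ring
  rw [pFlux, real_inner_smul_right, real_inner_self_eq_norm_sq,
    ← Real.rpow_add_natCast' (norm_nonneg v) (by rwa [hp']), hp']

lemma divergence_pFlux_comp [FiniteDimensional ℝ E] {G : E → E} {x : E} (hp : 2 < p)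
    (hG : DifferentiableAt ℝ G x) :
    divergence (pFlux p ∘ G) x = ‖G x‖ ^ (p - 2) * divergence G x +
      (p - 2) * ‖G x‖ ^ (p - 4) * ⟪fderiv ℝ G x (G x), G x⟫ := by
  have hrank_one : ((innerSL ℝ (G x)).smulRight (G x)).comp (fderiv ℝ G x) =
      ((innerSL ℝ (G x)).comp (fderiv ℝ G x)).smulRight (G x) := rfl
  rw [divergence, ((hasFDerivAt_pFlux hp (G x)).comp x hG.hasFDerivAt).fderiv,
    ContinuousLinearMap.add_comp, ContinuousLinearMap.smul_comp, ContinuousLinearMap.smul_comp,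
    hrank_one]
  simp [divergence, LinearMap.trace_smulRight, real_inner_comm]

end PFlux

section CutoffIntegrals

variable {p : ℝ}

lemma integrable_rpow_mul {X : Type*} [TopologicalSpace X] [MeasurableSpace X]
    [OpensMeasurableSpace X] {μ : Measure X} [IsFiniteMeasureOnCompacts μ] {s : Set X}
    {η f : X → ℝ} (hp : 0 < p) (hη : Continuous η) (hc : HasCompactSupport η)
    (hηs : tsupport η ⊆ s) (hf : ContinuousOn f s) : Integrable (fun x ↦ η x ^ p * f x) μ := by
  have hcont : ContinuousOn (fun x ↦ η x ^ p * f x) (tsupport η) :=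
    (hη.rpow_const fun _ ↦ Or.inr hp.le).continuousOn.mul (hf.mono hηs)
  refine (integrableOn_iff_integrable_of_support_subset fun x hx ↦ ?_).1
    (hcont.integrableOn_compact' hc (isClosed_tsupport η).measurableSet)
  contrapose! hx
  simp [image_eq_zero_of_notMem_tsupport hx, Real.zero_rpow hp.ne']

lemma integrable_norm_fderiv_rpow_mul {E : Type*} [NormedAddCommGroup E] [NormedSpace ℝ E]
    [MeasurableSpace E] [OpensMeasurableSpace E] {μ : Measure E} [IsFiniteMeasureOnCompacts μ]
    {K : NNReal} {s : Set E} {η f : E → ℝ} (hp : 0 < p) (hη : LipschitzWith K η)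
    (hc : HasCompactSupport η) (hηs : tsupport η ⊆ s) (hf : ContinuousOn f s) :
    Integrable (fun x ↦ ‖fderiv ℝ η x‖ ^ p * f x) μ := by
  refine (integrableOn_iff_integrable_of_support_subset (s := tsupport η) fun x hx ↦ ?_).1 ?_
  · contrapose! hx
    have : fderiv ℝ η x = 0 := Function.notMem_support.1 fun h ↦ hx (support_fderiv_subset ℝ h)
    simp [this, Real.zero_rpow hp.ne']
  · refine ((hf.mono hηs).integrableOn_compact' hc
      (isClosed_tsupport η).measurableSet).bdd_mul (c := K ^ p)
      ((measurable_fderiv ℝ η).norm.pow_const p).aestronglyMeasurable (ae_of_all _ fun x ↦ ?_)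
    rw [Real.norm_of_nonneg (by positivity)]
    gcongr
    exact norm_fderiv_le_of_lipschitz ℝ hη

end CutoffIntegrals

section Caccioppoli

variable {E : Type*} [NormedAddCommGroup E] [InnerProductSpace ℝ E] {Ω : Set E} {u η : E → ℝ}
  {G : E → E} {p α : ℝ} {x : E}

/-- The test field `e^{αu} ηᵖ |G|ᵖ⁻² G`, where `G` stands for `∇u` and `η` for a cutoff function. -/
noncomputable def weightedFlux (p α : ℝ) (u η : E → ℝ) (G : E → E) (x : E) : E :=
  (Real.exp (α * u x) * η x ^ p) • pFlux p (G x)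

lemma tsupport_weightedFlux_subset (hp : p ≠ 0) :
    tsupport (weightedFlux p α u η G) ⊆ tsupport η := by
  refine closure_mono fun x hx ↦ ?_
  contrapose! hx
  simp [weightedFlux, Function.notMem_support.1 hx, Real.zero_rpow hp]

lemma locallyLipschitz_weightedFlux [CompleteSpace E] (hΩ : IsOpen Ω) (hp : 2 < p)
    (hu : ∀ x ∈ Ω, HasGradientAt u (G x) x) (hG : LocallyLipschitzOn Ω G)
    (hη : LocallyLipschitz η) (hηΩ : tsupport η ⊆ Ω) :
    LocallyLipschitz (weightedFlux p α u η G) := by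
  refine locallyLipschitz_of_tsupport_subset hΩ ?_
    ((tsupport_weightedFlux_subset (by positivity)).trans hηΩ)
  have hexp : LocallyLipschitz fun t : ℝ ↦ Real.exp (α * t) :=
    ContDiff.locallyLipschitz (𝕂 := ℝ) (by fun_prop)
  have hrpow : LocallyLipschitz fun t : ℝ ↦ t ^ p :=
    ContDiff.locallyLipschitz (𝕂 := ℝ) (mod_cast
      Real.contDiff_rpow_const_of_le (n := 1) (by push_cast; linarith))
  have hu' : LocallyLipschitzOn Ω u := locallyLipschitzOn_of_hasFDerivAt hΩ
    (fun x hx ↦ (hu x hx).hasFDerivAt)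
    ((InnerProductSpace.toDual ℝ E).continuous.comp_continuousOn hG.continuousOn)
  exact locallyLipschitzOn_smul
    (locallyLipschitzOn_smul (locallyLipschitzOn_comp (f := fun t ↦ Real.exp (α * t)) hexp hu')
      (locallyLipschitzOn_comp (f := fun t ↦ t ^ p) hrpow hη.locallyLipschitzOn))
    (locallyLipschitzOn_comp (locallyLipschitz_pFlux hp) hG)

variable [FiniteDimensional ℝ E]

lemma divergence_weightedFlux (hp : 2 < p) (hu : HasGradientAt u (G x) x)
    (hη : DifferentiableAt ℝ η x) (hG : DifferentiableAt ℝ G x) :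
    divergence (weightedFlux p α u η G) x =
      Real.exp (α * u x) * (η x ^ p * (divergence (pFlux p ∘ G) x + α * ‖G x‖ ^ p) +
        p * η x ^ (p - 1) * fderiv ℝ η x (pFlux p (G x))) := by
  have hweight := ((hu.hasFDerivAt.const_mul α).exp).fun_mul
    (hη.hasFDerivAt.rpow_const (p := p) (Or.inr (by linarith)))
  have hflux : DifferentiableAt ℝ (pFlux p ∘ G) x :=
    (hasFDerivAt_pFlux hp (G x)).differentiableAt.comp x hG
  refine (divergence_smul hweight hflux).trans ?_
  simp only [Function.comp_apply, add_apply, smul_apply, smul_eq_mul,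
    InnerProductSpace.toDual_apply_apply, inner_self_pFlux (by linarith : p ≠ 0)]
  ring

lemma mul_le_divergence_weightedFlux_add {β σ ε : ℝ} (hp : 2 < p) (hε : 0 < ε)
    (hu : HasGradientAt u (G x) x) (hη : DifferentiableAt ℝ η x)
    (hG : DifferentiableAt ℝ G x) (hη₀ : 0 ≤ η x) (hσ : 0 ≤ σ)
    (hdiv : -(β * ‖G x‖ ^ p + σ * ‖G x‖ ^ (p - 2)) ≤ divergence (pFlux p ∘ G) x) :
    (α - β - 2 * ε) * (η x ^ p * (‖G x‖ ^ p * Real.exp (α * u x))) ≤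
      divergence (weightedFlux p α u η G) x +
        ε * (η x ^ p * ((σ / ε) ^ (p / 2) * Real.exp (α * u x)) +
          (p / ε) ^ p * (‖fderiv ℝ η x‖ ^ p * Real.exp (α * u x))) := by
  have hp₀ : 0 < p := by linarith
  have hyoung_σ : ‖G x‖ ^ (p - 2) * σ ≤ ε * (‖G x‖ ^ p + (σ / ε) ^ (p / 2)) :=
    rpow_sub_mul_le_mul_add_rpow (norm_nonneg _) hσ two_pos hp.le hε
  have hyoung_η : η x ^ (p - 1) * ‖G x‖ ^ (p - 1) * (p * ‖fderiv ℝ η x‖) ≤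
      ε * (η x ^ p * ‖G x‖ ^ p + (p / ε) ^ p * ‖fderiv ℝ η x‖ ^ p) := by
    have h := rpow_sub_mul_le_mul_add_rpow (p := p) (mul_nonneg hη₀ (norm_nonneg (G x)))
      (mul_nonneg hp₀.le (norm_nonneg (fderiv ℝ η x))) one_pos (by linarith) hε
    rwa [div_one, mul_div_right_comm, Real.mul_rpow hη₀ (norm_nonneg _),
      Real.mul_rpow hη₀ (norm_nonneg _), Real.mul_rpow (by positivity) (norm_nonneg _)] at h
  have hfderiv : -(‖fderiv ℝ η x‖ * ‖G x‖ ^ (p - 1)) ≤ fderiv ℝ η x (pFlux p (G x)) := by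
    rw [← norm_pFlux (by linarith)]
    exact neg_le_of_abs_le ((fderiv ℝ η x).le_opNorm _)
  rw [divergence_weightedFlux hp hu hη hG]
  have hmain : (α - β - 2 * ε) * (η x ^ p * ‖G x‖ ^ p) ≤
      η x ^ p * (divergence (pFlux p ∘ G) x + α * ‖G x‖ ^ p) +
        p * η x ^ (p - 1) * fderiv ℝ η x (pFlux p (G x)) +
        ε * (η x ^ p * (σ / ε) ^ (p / 2) + (p / ε) ^ p * ‖fderiv ℝ η x‖ ^ p) := by
    have hη₁ : 0 ≤ η x ^ p := by positivity
    have := mul_le_mul_of_nonneg_left hdiv hη₁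
    have := mul_le_mul_of_nonneg_left hyoung_σ hη₁
    have := mul_le_mul_of_nonneg_left hfderiv (by positivity : 0 ≤ p * η x ^ (p - 1))
    linarith
  have := mul_le_mul_of_nonneg_right hmain (Real.exp_pos (α * u x)).le
  linarith

variable [MeasurableSpace E] [BorelSpace E] {μ : Measure E} [μ.IsAddHaarMeasure]

lemma integrable_divergence_weightedFlux_and_integral_eq_zero (hΩ : IsOpen Ω) (hp : 2 < p)
    (hu : ∀ x ∈ Ω, HasGradientAt u (G x) x) (hG : LocallyLipschitzOn Ω G)
    (hη : LocallyLipschitz η) (hc : HasCompactSupport η) (hηΩ : tsupport η ⊆ Ω) :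
    Integrable (divergence (weightedFlux p α u η G)) μ ∧
      ∫ x, divergence (weightedFlux p α u η G) x ∂μ = 0 := by
  have hWc : HasCompactSupport (weightedFlux p α u η G) :=
    hc.of_isClosed_subset (isClosed_tsupport _) (tsupport_weightedFlux_subset (by linarith))
  obtain ⟨K, hW⟩ := exists_lipschitzWith_of_hasCompactSupport
    (locallyLipschitz_weightedFlux (α := α) hΩ hp hu hG hη hηΩ) hWc
  exact integrable_divergence_and_integral_eq_zero hW hWc

theorem caccioppoli_inequality {K : NNReal} {σ : E → ℝ} {β ε : ℝ} (hp : 2 < p)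
    (hε : 0 < ε) (hΩ : IsOpen Ω) (hu : ∀ x ∈ Ω, HasGradientAt u (G x) x)
    (hG : LocallyLipschitzOn Ω G) (hη : LipschitzWith K η) (hη₀ : 0 ≤ η)
    (hc : HasCompactSupport η) (hηΩ : tsupport η ⊆ Ω) (hσ : ContinuousOn σ Ω) (hσ₀ : 0 ≤ σ)
    (hdiv : ∀ᵐ x ∂μ, x ∈ tsupport η → DifferentiableAt ℝ G x ∧
      -(β * ‖G x‖ ^ p + σ x * ‖G x‖ ^ (p - 2)) ≤ divergence (pFlux p ∘ G) x) :
    (α - β - 2 * ε) * ∫ x, η x ^ p * (‖G x‖ ^ p * Real.exp (α * u x)) ∂μ ≤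
      ε * ((∫ x, η x ^ p * ((σ x / ε) ^ (p / 2) * Real.exp (α * u x)) ∂μ) +
        (p / ε) ^ p * ∫ x, ‖fderiv ℝ η x‖ ^ p * Real.exp (α * u x) ∂μ) := by
  have hp₀ : 0 < p := by linarith
  have hucont : ContinuousOn u Ω := fun x hx ↦ (hu x hx).continuousAt.continuousWithinAt
  have hexp : ContinuousOn (fun x ↦ Real.exp (α * u x)) Ω := by fun_prop
  have hGint : Integrable (fun x ↦ η x ^ p * (‖G x‖ ^ p * Real.exp (α * u x))) μ :=
    integrable_rpow_mul hp₀ hη.continuous hc hηΩ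
      ((hG.continuousOn.norm.rpow_const fun _ _ ↦ Or.inr hp₀.le).mul hexp)
  have hσint : Integrable (fun x ↦ η x ^ p * ((σ x / ε) ^ (p / 2) * Real.exp (α * u x))) μ :=
    integrable_rpow_mul hp₀ hη.continuous hc hηΩ
      (((hσ.div_const ε).rpow_const fun _ _ ↦ Or.inr (by positivity)).mul hexp)
  have hηint : Integrable (fun x ↦ ‖fderiv ℝ η x‖ ^ p * Real.exp (α * u x)) μ :=
    integrable_norm_fderiv_rpow_mul hp₀ hη hc hηΩ hexp
  obtain ⟨hWint, hWzero⟩ := integrable_divergence_weightedFlux_and_integral_eq_zero (μ := μ)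
    (α := α) hΩ hp hu hG hη.locallyLipschitz hc hηΩ
  have herr : Integrable (fun x ↦ ε * (η x ^ p * ((σ x / ε) ^ (p / 2) * Real.exp (α * u x)) +
      (p / ε) ^ p * (‖fderiv ℝ η x‖ ^ p * Real.exp (α * u x)))) μ :=
    (hσint.add (hηint.const_mul _)).const_mul ε
  rw [← integral_const_mul, ← integral_const_mul, ← integral_add hσint (hηint.const_mul _),
    ← integral_const_mul, ← zero_add (∫ x, ε * _ ∂μ), ← hWzero, ← integral_add hWint herr]
  refine integral_mono_ae (hGint.const_mul _) (hWint.add herr) ?_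
  filter_upwards [hdiv, hη.ae_differentiableAt] with x hx hηx
  by_cases hxη : x ∈ tsupport η
  · obtain ⟨hGx, hdivx⟩ := hx hxη
    exact mul_le_divergence_weightedFlux_add hp hε (hu x (hηΩ hxη)) hηx hGx (hη₀ x) (hσ₀ x) hdivx
  · have hW₀ := divergence_eq_zero_of_notMem_tsupport fun h ↦
      hxη (tsupport_weightedFlux_subset (u := u) (G := G) (α := α) hp₀.ne' h)
    rw [hW₀, image_eq_zero_of_notMem_tsupport hxη, Real.zero_rpow hp₀.ne']
    simp only [zero_mul, mul_zero, zero_add]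
    positivity

end Caccioppoli

section Annulus

variable {E : Type*} [NormedAddCommGroup E] {a b c d : ℝ} {x : E}

/-- The open annulus of inner radius `a` and outer radius `b` centred at the origin. -/
def annulus (a b : ℝ) : Set E := {x | a < ‖x‖ ∧ ‖x‖ < b}

/-- The closed annulus of inner radius `a` and outer radius `b` centred at the origin. -/
def closedAnnulus (a b : ℝ) : Set E := {x | a ≤ ‖x‖ ∧ ‖x‖ ≤ b}

lemma annulus_subset_closedAnnulus : (annulus a b : Set E) ⊆ closedAnnulus a b :=
  fun _ hx ↦ ⟨hx.1.le, hx.2.le⟩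

lemma closedAnnulus_subset_closedAnnulus (hca : c ≤ a) (hbd : b ≤ d) :
    (closedAnnulus a b : Set E) ⊆ closedAnnulus c d :=
  fun _ hx ↦ ⟨hca.trans hx.1, hx.2.trans hbd⟩

lemma measurableSet_annulus [MeasurableSpace E] [OpensMeasurableSpace E] :
    MeasurableSet (annulus a b : Set E) :=
  ((isOpen_lt continuous_const continuous_norm).inter
    (isOpen_lt continuous_norm continuous_const)).measurableSet

lemma isCompact_closedAnnulus [ProperSpace E] : IsCompact (closedAnnulus a b : Set E) :=
  (isCompact_closedBall (0 : E) b).of_isClosed_subset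
    ((isClosed_le continuous_const continuous_norm).inter
      (isClosed_le continuous_norm continuous_const))
    fun _ hx ↦ mem_closedBall_zero_iff.2 hx.2

lemma ae_closedAnnulus_imp_annulus [NormedSpace ℝ E] [FiniteDimensional ℝ E] [MeasurableSpace E]
    [BorelSpace E] {μ : Measure E} [μ.IsAddHaarMeasure] (ha : a ≠ 0) (hb : b ≠ 0) :
    ∀ᵐ x ∂μ, x ∈ closedAnnulus a b → x ∈ annulus a b := by
  filter_upwards [measure_eq_zero_iff_ae_notMem.1 (μ.addHaar_sphere_of_ne_zero 0 ha),
    measure_eq_zero_iff_ae_notMem.1 (μ.addHaar_sphere_of_ne_zero 0 hb)] with x hxa hxb hx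
  rw [mem_sphere_zero_iff_norm] at hxa hxb
  exact ⟨hx.1.lt_of_ne' hxa, hx.2.lt_of_ne hxb⟩

lemma integrableOn_annulus_of_continuousOn [ProperSpace E] [MeasurableSpace E]
    [OpensMeasurableSpace E] {μ : Measure E} [IsFiniteMeasureOnCompacts μ] {f : E → ℝ} {s t : ℝ}
    (hf : ContinuousOn f (closedAnnulus a b)) (has : a ≤ s) (htb : t ≤ b) :
    IntegrableOn f (annulus s t) μ :=
  (hf.integrableOn_compact isCompact_closedAnnulus).mono_set <|
    annulus_subset_closedAnnulus.trans (closedAnnulus_subset_closedAnnulus has htb)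

/-- The radial cutoff function which is affine in `‖x‖` between the spheres of radius `a` and `b`,
where it takes the values `0` and `1`, and is constant elsewhere. Both `a < b` and `b < a` are
meaningful. -/
noncomputable def radialRamp (a b : ℝ) (x : E) : ℝ := max 0 (min 1 ((‖x‖ - a) / (b - a)))

lemma radialRamp_nonneg : 0 ≤ radialRamp a b x := le_max_left _ _

lemma radialRamp_le_one : radialRamp a b x ≤ 1 := max_le zero_le_one (min_le_left _ _)

lemma radialRamp_eq_one (h : 1 ≤ (‖x‖ - a) / (b - a)) : radialRamp a b x = 1 := by
  rw [radialRamp, min_eq_left h, max_eq_right zero_le_one]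

lemma radialRamp_eq_zero (h : (‖x‖ - a) / (b - a) ≤ 0) : radialRamp a b x = 0 :=
  max_eq_left ((min_le_right _ _).trans h)

lemma lipschitzWith_radialRamp : LipschitzWith ‖b - a‖₊⁻¹ (radialRamp a b : E → ℝ) := by
  refine LipschitzWith.const_max (LipschitzWith.const_min ?_ 1) 0
  refine LipschitzWith.of_dist_le_mul fun x y ↦ ?_
  rw [Real.dist_eq, ← sub_div, sub_sub_sub_cancel_right, abs_div, div_eq_inv_mul, dist_eq_norm]
  exact mul_le_mul_of_nonneg_left (abs_norm_sub_norm_le x y) (by positivity)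

/-- The radial cutoff function which is `1` on the annulus of radii `b ≤ c`, is `0` off the annulus
of radii `a < d`, and is affine in `‖x‖` in between. -/
noncomputable def annularCutoff (a b c d : ℝ) (x : E) : ℝ :=
  min (radialRamp a b x) (radialRamp d c x)

lemma annularCutoff_nonneg : 0 ≤ annularCutoff a b c d x :=
  le_min radialRamp_nonneg radialRamp_nonneg

lemma annularCutoff_le_one : annularCutoff a b c d x ≤ 1 :=
  (min_le_left _ _).trans radialRamp_le_one

lemma annularCutoff_eq_radialRamp_left (hcd : c < d) (hx : ‖x‖ ≤ c) :
    annularCutoff a b c d x = radialRamp a b x := by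
  have : radialRamp d c x = 1 :=
    radialRamp_eq_one ((one_le_div_of_neg (sub_neg.2 hcd)).2 (by linarith))
  rw [annularCutoff, this, min_eq_left radialRamp_le_one]

lemma annularCutoff_eq_radialRamp_right (hab : a < b) (hx : b ≤ ‖x‖) :
    annularCutoff a b c d x = radialRamp d c x := by
  have : radialRamp a b x = 1 :=
    radialRamp_eq_one ((one_le_div (sub_pos.2 hab)).2 (by linarith))
  rw [annularCutoff, this, min_eq_right radialRamp_le_one]

lemma annularCutoff_eq_one (hab : a < b) (hcd : c < d) (hx : x ∈ closedAnnulus b c) :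
    annularCutoff a b c d x = 1 := by
  rw [annularCutoff_eq_radialRamp_left hcd hx.2]
  exact radialRamp_eq_one ((one_le_div (sub_pos.2 hab)).2 (by linarith [hx.1]))

lemma annularCutoff_eq_zero (hab : a < b) (hcd : c < d) (hx : x ∉ annulus a d) :
    annularCutoff a b c d x = 0 := by
  refine le_antisymm ?_ annularCutoff_nonneg
  by_cases hxa : ‖x‖ ≤ a
  · exact (min_le_left _ _).trans_eq
      (radialRamp_eq_zero (div_nonpos_of_nonpos_of_nonneg (by linarith) (by linarith)))
  · have hxd : d ≤ ‖x‖ := not_lt.1 fun h ↦ hx ⟨not_le.1 hxa, h⟩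
    exact (min_le_right _ _).trans_eq
      (radialRamp_eq_zero (div_nonpos_of_nonneg_of_nonpos (by linarith) (by linarith)))

lemma tsupport_annularCutoff_subset (hab : a < b) (hcd : c < d) :
    tsupport (annularCutoff a b c d : E → ℝ) ⊆ closedAnnulus a d := by
  refine closure_minimal (fun x hx ↦ annulus_subset_closedAnnulus ?_)
    ((isClosed_le continuous_const continuous_norm).inter
      (isClosed_le continuous_norm continuous_const))
  by_contra h
  exact hx (annularCutoff_eq_zero hab hcd h)

lemma hasCompactSupport_annularCutoff [ProperSpace E] (hab : a < b) (hcd : c < d) :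
    HasCompactSupport (annularCutoff a b c d : E → ℝ) :=
  isCompact_closedAnnulus.of_isClosed_subset (isClosed_tsupport _)
    (tsupport_annularCutoff_subset hab hcd)

lemma lipschitzWith_annularCutoff :
    LipschitzWith (max ‖b - a‖₊⁻¹ ‖c - d‖₊⁻¹) (annularCutoff a b c d : E → ℝ) :=
  lipschitzWith_radialRamp.min lipschitzWith_radialRamp

section Deriv

variable [NormedSpace ℝ E]

lemma norm_fderiv_radialRamp_le : ‖fderiv ℝ (radialRamp a b) x‖ ≤ |b - a|⁻¹ := by
  simpa using norm_fderiv_le_of_lipschitz ℝ (x₀ := x) (lipschitzWith_radialRamp (a := a) (b := b))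

lemma norm_fderiv_annularCutoff_le_left (hbc : b ≤ c) (hcd : c < d) (hx : ‖x‖ < b) :
    ‖fderiv ℝ (annularCutoff a b c d) x‖ ≤ |b - a|⁻¹ := by
  have h : annularCutoff a b c d =ᶠ[nhds x] radialRamp a b := by
    filter_upwards [(isOpen_lt continuous_norm continuous_const).mem_nhds hx] with y hy
    exact annularCutoff_eq_radialRamp_left hcd (hy.le.trans hbc)
  rw [h.fderiv_eq]
  exact norm_fderiv_radialRamp_le

lemma norm_fderiv_annularCutoff_le_right (hab : a < b) (hbc : b ≤ c) (hx : c < ‖x‖) :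
    ‖fderiv ℝ (annularCutoff a b c d) x‖ ≤ |c - d|⁻¹ := by
  have h : annularCutoff a b c d =ᶠ[nhds x] radialRamp d c := by
    filter_upwards [(isOpen_lt continuous_const continuous_norm).mem_nhds hx] with y hy
    exact annularCutoff_eq_radialRamp_right hab (hbc.trans hy.le)
  rw [h.fderiv_eq]
  exact norm_fderiv_radialRamp_le

lemma fderiv_annularCutoff_eq_zero (hab : a < b) (hcd : c < d) (hxab : x ∉ annulus a b)
    (hxcd : x ∉ annulus c d) : fderiv ℝ (annularCutoff a b c d) x = 0 := by
  by_cases hx : x ∈ closedAnnulus b c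
  · refine IsLocalMax.fderiv_eq_zero (Filter.Eventually.of_forall fun y ↦ ?_)
    exact annularCutoff_le_one.trans_eq (annularCutoff_eq_one hab hcd hx).symm
  · refine IsLocalMin.fderiv_eq_zero (Filter.Eventually.of_forall fun y ↦ ?_)
    refine (annularCutoff_eq_zero hab hcd fun hxad ↦ ?_).trans_le annularCutoff_nonneg
    have hbx : b ≤ ‖x‖ := not_lt.1 fun h ↦ hxab ⟨hxad.1, h⟩
    exact hxcd ⟨not_le.1 fun h ↦ hx ⟨hbx, h⟩, hxad.2⟩

end Deriv

variable [MeasurableSpace E] [OpensMeasurableSpace E] {μ : Measure E} {p : ℝ} {f : E → ℝ}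

lemma setIntegral_annulus_le_integral_annularCutoff_rpow_mul (hab : a < b) (hcd : c < d)
    (hf : 0 ≤ f) (hint : Integrable (fun x ↦ annularCutoff a b c d x ^ p * f x) μ) :
    ∫ x in annulus b c, f x ∂μ ≤ ∫ x, annularCutoff a b c d x ^ p * f x ∂μ := by
  rw [← integral_indicator measurableSet_annulus]
  refine integral_mono_of_nonneg (ae_of_all _ (Set.indicator_nonneg fun x _ ↦ hf x)) hint
    (ae_of_all _ (Set.indicator_le' (fun x hx ↦ ?_) fun x _ ↦ ?_))
  · rw [annularCutoff_eq_one hab hcd (annulus_subset_closedAnnulus hx), Real.one_rpow, one_mul]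
  · exact mul_nonneg (Real.rpow_nonneg annularCutoff_nonneg p) (hf x)

lemma integral_annularCutoff_rpow_mul_le (hp : 0 < p) (hab : a < b) (hcd : c < d) (hf : 0 ≤ f)
    (hint : IntegrableOn f (annulus a d) μ) :
    ∫ x, annularCutoff a b c d x ^ p * f x ∂μ ≤ ∫ x in annulus a d, f x ∂μ := by
  rw [← integral_indicator measurableSet_annulus]
  refine integral_mono_of_nonneg
    (ae_of_all _ fun x ↦ mul_nonneg (Real.rpow_nonneg annularCutoff_nonneg p) (hf x))
    (hint.integrable_indicator measurableSet_annulus) (ae_of_all _ fun x ↦ ?_)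
  by_cases hx : x ∈ annulus a d
  · rw [Set.indicator_of_mem hx]
    exact mul_le_of_le_one_left (hf x)
      (Real.rpow_le_one annularCutoff_nonneg annularCutoff_le_one hp.le)
  · simp only [Set.indicator_of_notMem hx, annularCutoff_eq_zero hab hcd hx,
      Real.zero_rpow hp.ne', zero_mul, le_refl]

lemma integral_norm_fderiv_annularCutoff_rpow_mul_le [NormedSpace ℝ E] (hp : 0 < p)
    (hab : a < b) (hbc : b ≤ c) (hcd : c < d) (hf : 0 ≤ f)
    (hab_int : IntegrableOn f (annulus a b) μ) (hcd_int : IntegrableOn f (annulus c d) μ) :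
    ∫ x, ‖fderiv ℝ (annularCutoff a b c d) x‖ ^ p * f x ∂μ ≤
      (b - a) ^ (-p) * (∫ x in annulus a b, f x ∂μ) +
        (d - c) ^ (-p) * ∫ x in annulus c d, f x ∂μ := by
  have hba : 0 < b - a := sub_pos.2 hab
  have hdc : 0 < d - c := sub_pos.2 hcd
  have hab_int' := (hab_int.integrable_indicator measurableSet_annulus).const_mul ((b - a) ^ (-p))
  have hcd_int' := (hcd_int.integrable_indicator measurableSet_annulus).const_mul ((d - c) ^ (-p))
  rw [← integral_indicator measurableSet_annulus, ← integral_indicator measurableSet_annulus,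
    ← integral_const_mul, ← integral_const_mul, ← integral_add hab_int' hcd_int']
  refine integral_mono_of_nonneg (ae_of_all _ fun x ↦ mul_nonneg (by positivity) (hf x))
    (hab_int'.add hcd_int') (ae_of_all _ fun x ↦ ?_)
  dsimp only
  have hind (s : Set E) : 0 ≤ s.indicator f x := Set.indicator_nonneg (fun y _ ↦ hf y) x
  have hfx : 0 ≤ f x := hf x
  by_cases hxab : x ∈ annulus a b
  · have hgrad := norm_fderiv_annularCutoff_le_left (a := a) hbc hcd hxab.2
    rw [abs_of_pos hba] at hgrad
    rw [Set.indicator_of_mem hxab, Real.rpow_neg hba.le, ← Real.inv_rpow hba.le]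
    refine le_add_of_le_of_nonneg (by gcongr) (mul_nonneg (by positivity) (hind _))
  by_cases hxcd : x ∈ annulus c d
  · have hgrad := norm_fderiv_annularCutoff_le_right (d := d) hab hbc hxcd.1
    rw [abs_sub_comm, abs_of_pos hdc] at hgrad
    rw [Set.indicator_of_mem hxcd, Real.rpow_neg hdc.le, ← Real.inv_rpow hdc.le]
    refine le_add_of_nonneg_of_le (mul_nonneg (by positivity) (hind _)) (by gcongr)
  · rw [fderiv_annularCutoff_eq_zero hab hcd hxab hxcd, norm_zero, Real.zero_rpow hp.ne', zero_mul]
    exact add_nonneg (mul_nonneg (by positivity) (hind _)) (mul_nonneg (by positivity) (hind _))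

end Annulus

section GradientEstimate

variable {E : Type*} [NormedAddCommGroup E] [InnerProductSpace ℝ E] [FiniteDimensional ℝ E]
  {u : E → ℝ} {G : E → E}

theorem annulus_energy_estimate [MeasurableSpace E] [BorelSpace E]
    {μ : Measure E} [μ.IsAddHaarMeasure] {Ω : Set E} {σ : E → ℝ} {p α β ε a b c d : ℝ}
    (hp : 2 < p) (hε : 0 < ε) (hβα : β + 2 * ε ≤ α) (ha : 0 < a) (hab : a < b) (hbc : b ≤ c)
    (hcd : c < d) (hΩ : IsOpen Ω) (hadΩ : closedAnnulus a d ⊆ Ω)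
    (hu : ∀ x ∈ Ω, HasGradientAt u (G x) x) (hG : LocallyLipschitzOn Ω G)
    (hσ : ContinuousOn σ Ω) (hσ₀ : 0 ≤ σ)
    (hdiv : ∀ᵐ x ∂μ, x ∈ annulus a d → DifferentiableAt ℝ G x ∧
      -(β * ‖G x‖ ^ p + σ x * ‖G x‖ ^ (p - 2)) ≤ divergence (pFlux p ∘ G) x) :
    (α - β - 2 * ε) * ∫ x in annulus b c, ‖G x‖ ^ p * Real.exp (α * u x) ∂μ ≤
      ε * ((∫ x in annulus a d, (σ x / ε) ^ (p / 2) * Real.exp (α * u x) ∂μ) +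
        (p / ε) ^ p * ((b - a) ^ (-p) * (∫ x in annulus a b, Real.exp (α * u x) ∂μ) +
          (d - c) ^ (-p) * ∫ x in annulus c d, Real.exp (α * u x) ∂μ)) := by
  have hp₀ : 0 < p := by linarith
  have hη : LipschitzWith _ (annularCutoff a b c d : E → ℝ) := lipschitzWith_annularCutoff
  have hη_supp : tsupport (annularCutoff a b c d : E → ℝ) ⊆ closedAnnulus a d :=
    tsupport_annularCutoff_subset hab hcd
  have hη_compact : HasCompactSupport (annularCutoff a b c d : E → ℝ) :=
    hasCompactSupport_annularCutoff hab hcd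
  have hucont : ContinuousOn u Ω := fun x hx ↦ (hu x hx).continuousAt.continuousWithinAt
  have hexp : ContinuousOn (fun x ↦ Real.exp (α * u x)) Ω := by fun_prop
  have hcaccioppoli := caccioppoli_inequality (μ := μ) (α := α) hp hε hΩ hu hG hη
    (fun _ ↦ annularCutoff_nonneg) hη_compact (hη_supp.trans hadΩ) hσ hσ₀ <| by
      filter_upwards [hdiv, ae_closedAnnulus_imp_annulus ha.ne' (by linarith)] with x hx hx' hxη
      exact hx (hx' (hη_supp hxη))
  have hcoeff : 0 ≤ α - β - 2 * ε := by linarith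
  calc _ ≤ (α - β - 2 * ε) *
          ∫ x, annularCutoff a b c d x ^ p * (‖G x‖ ^ p * Real.exp (α * u x)) ∂μ := by
        gcongr
        refine setIntegral_annulus_le_integral_annularCutoff_rpow_mul hab hcd
          (fun _ ↦ by positivity) (integrable_rpow_mul hp₀ hη.continuous hη_compact
            (hη_supp.trans hadΩ) ?_)
        exact (hG.continuousOn.norm.rpow_const fun _ _ ↦ Or.inr hp₀.le).mul hexp
    _ ≤ _ := hcaccioppoli
    _ ≤ _ := by
        gcongr
        · refine integral_annularCutoff_rpow_mul_le hp₀ hab hcd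
            (fun x ↦ mul_nonneg (Real.rpow_nonneg (div_nonneg (hσ₀ x) hε.le) _) (Real.exp_pos _).le)
            (integrableOn_annulus_of_continuousOn (ContinuousOn.mono ?_ hadΩ) le_rfl le_rfl)
          exact ((hσ.div_const ε).rpow_const fun _ _ ↦ Or.inr (by positivity)).mul hexp
        · exact integral_norm_fderiv_annularCutoff_rpow_mul_le hp₀ hab hbc hcd
            (fun _ ↦ by positivity)
            (integrableOn_annulus_of_continuousOn (hexp.mono hadΩ) le_rfl (by linarith))
            (integrableOn_annulus_of_continuousOn (hexp.mono hadΩ) (by linarith) le_rfl)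

lemma le_mul_add_of_mul_le_mul_add {m ε k q t I A B D : ℝ} (hε : 0 < ε) (hεm : ε ≤ m) (hk : 0 ≤ k)
    (hq : 0 ≤ q) (ht : 1 ≤ t) (hI : 0 ≤ I) (hA : 0 ≤ A) (hB : 0 ≤ B) (hD : 0 ≤ D)
    (h : m * I ≤ ε * (k * A + q * (t * B + D))) : I ≤ (k + t * q) * (A + B + D) := by
  have : 0 ≤ t * q := mul_nonneg (by linarith) hq
  refine le_of_mul_le_mul_left ?_ hε
  calc ε * I ≤ m * I := by gcongr
    _ ≤ ε * (k * A + q * (t * B + D)) := h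
    _ ≤ ε * (k * A + q * (t * B + t * D)) := by
      gcongr
      exact le_mul_of_one_le_left hD ht
    _ = ε * (k * A + t * q * (B + D)) := by ring
    _ ≤ ε * (k * (A + B + D) + t * q * (A + B + D)) := by gcongr <;> linarith
    _ = ε * ((k + t * q) * (A + B + D)) := by rw [add_mul]

theorem dyadic_annulus_energy_estimate [MeasurableSpace E] [BorelSpace E]
    {μ : Measure E} [μ.IsAddHaarMeasure] {Ω : Set E} {σ : E → ℝ} {p α β κ ε r₁ r₂ : ℝ}
    (hp : 2 < p) (hκ : 0 ≤ κ) (hε : 0 < ε) (hβα : β + 3 * ε ≤ α) (hr₁ : 0 < r₁) (hr : r₁ ≤ r₂)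
    (hΩ : IsOpen Ω) (hrΩ : closedAnnulus (r₁ / 2) (2 * r₂) ⊆ Ω)
    (hu : ∀ x ∈ Ω, HasGradientAt u (G x) x) (hG : LocallyLipschitzOn Ω G)
    (hσ : ContinuousOn σ Ω) (hσ₀ : 0 ≤ σ)
    (hdiv : ∀ᵐ x ∂μ, x ∈ annulus (r₁ / 2) (2 * r₂) → DifferentiableAt ℝ G x ∧
      -(β * ‖G x‖ ^ p + κ * σ x * ‖G x‖ ^ (p - 2)) ≤ divergence (pFlux p ∘ G) x) :
    ∫ x in annulus r₁ r₂, ‖G x‖ ^ p * Real.exp (α * u x) ∂μ ≤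
      ((κ / ε) ^ (p / 2) + (2 * (p / ε)) ^ p) *
        ((∫ x in annulus (r₁ / 2) (2 * r₂), σ x ^ (p / 2) * Real.exp (α * u x) ∂μ) +
          r₁ ^ (-p) * (∫ x in annulus (r₁ / 2) r₁, Real.exp (α * u x) ∂μ) +
          r₂ ^ (-p) * ∫ x in annulus r₂ (2 * r₂), Real.exp (α * u x) ∂μ) := by
  have hr₂ : 0 < r₂ := hr₁.trans_le hr
  have hest := annulus_energy_estimate (α := α) hp hε (by linarith)
    (half_pos hr₁) (half_lt_self hr₁) hr (by linarith) hΩ hrΩ hu hG (hσ.const_mul κ)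
    (fun x ↦ mul_nonneg hκ (hσ₀ x)) hdiv
  have hσ_const (x : E) : (κ * σ x / ε) ^ (p / 2) * Real.exp (α * u x) =
      (κ / ε) ^ (p / 2) * (σ x ^ (p / 2) * Real.exp (α * u x)) := by
    rw [mul_div_right_comm, Real.mul_rpow (by positivity) (hσ₀ x), mul_assoc]
  have hinner : (r₁ - r₁ / 2) ^ (-p) = 2 ^ p * r₁ ^ (-p) := by
    rw [sub_half, Real.div_rpow hr₁.le zero_le_two, Real.rpow_neg zero_le_two, div_inv_eq_mul,
      mul_comm]
  have houter : 2 * r₂ - r₂ = r₂ := by ring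
  simp only [hσ_const, integral_const_mul, hinner, houter] at hest
  rw [mul_assoc _ (r₁ ^ (-p))] at hest
  have hconst : (2 * (p / ε)) ^ p = 2 ^ p * (p / ε) ^ p :=
    Real.mul_rpow zero_le_two (by positivity)
  rw [hconst]
  exact le_mul_add_of_mul_le_mul_add hε (by linarith) (by positivity) (by positivity)
    (Real.one_le_rpow one_le_two (by linarith)) (integral_nonneg fun _ ↦ by positivity)
    (integral_nonneg fun x ↦ mul_nonneg (Real.rpow_nonneg (hσ₀ x) _) (Real.exp_pos _).le)
    (mul_nonneg (by positivity) (integral_nonneg fun _ ↦ by positivity))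
    (mul_nonneg (by positivity) (integral_nonneg fun _ ↦ by positivity)) hest

lemma neg_add_le_divergence_pFlux_comp {N δ αd p : ℝ} {x : E} {S : E →L[ℝ] E} (hp : 2 < p)
    (hδ : δ < 1 / 2) (hN : N - 2 = (p - 2) * (1 - 2 * δ))
    (hαd : (N - 2) * δ = αd * (1 - 2 * δ)) (hG : DifferentiableAt ℝ G x)
    (hcurv : 0 ≤ (N - 2) * ⟪fderiv ℝ G x (G x), G x⟫ + (1 - 2 * δ) * divergence G x * ‖G x‖ ^ 2 +
      (N - 2) * δ * ‖G x‖ ^ 4 + ⟪S (G x), G x⟫) :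
    -(αd * ‖G x‖ ^ p + (1 - 2 * δ)⁻¹ * ‖S‖ * ‖G x‖ ^ (p - 2)) ≤ divergence (pFlux p ∘ G) x := by
  have hδ' : 0 < 1 - 2 * δ := by linarith
  rw [divergence_pFlux_comp hp hG]
  rcases eq_or_ne (G x) 0 with hGx | hGx
  · simp [hGx, Real.zero_rpow (by linarith : p - 2 ≠ 0), Real.zero_rpow (by linarith : p ≠ 0)]
  have hGx' : 0 < ‖G x‖ := norm_pos_iff.2 hGx
  have hS : ⟪S (G x), G x⟫ ≤ ‖S‖ * ‖G x‖ ^ 2 := by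
    calc ⟪S (G x), G x⟫ ≤ ‖S (G x)‖ * ‖G x‖ := real_inner_le_norm _ _
      _ ≤ ‖S‖ * ‖G x‖ * ‖G x‖ := by gcongr; exact S.le_opNorm _
      _ = ‖S‖ * ‖G x‖ ^ 2 := by ring
  have hreduced : 0 ≤ (p - 2) * ⟪fderiv ℝ G x (G x), G x⟫ + divergence G x * ‖G x‖ ^ 2 +
      αd * ‖G x‖ ^ 4 + (1 - 2 * δ)⁻¹ * ‖S‖ * ‖G x‖ ^ 2 := by
    refine nonneg_of_mul_nonneg_right (a := 1 - 2 * δ) ?_ hδ'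
    rw [hαd, hN] at hcurv
    field_simp
    linarith
  have hp₂ : ‖G x‖ ^ (p - 2) = ‖G x‖ ^ (p - 4) * ‖G x‖ ^ 2 := by
    rw [← Real.rpow_add_natCast hGx'.ne']; congr 1; push_cast; ring
  have hp₄ : ‖G x‖ ^ p = ‖G x‖ ^ (p - 4) * ‖G x‖ ^ 4 := by
    rw [← Real.rpow_add_natCast hGx'.ne']; congr 1; push_cast; ring
  have := mul_nonneg (Real.rpow_nonneg hGx'.le (p - 4)) hreduced
  rw [hp₂, hp₄]
  linarith

theorem stmt_6_general [MeasurableSpace E] [BorelSpace E] (μ : Measure E) [μ.IsAddHaarMeasure]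
    {N δ αd p α : ℝ} (hN : 2 < N) (hδ : δ < 1 / 2) (hαd : αd = (N - 2) * δ / (1 - 2 * δ))
    (hp : p = N + 2 * αd) (hα : αd < α) :
    ∃ C : ℝ, 0 < C ∧ ∀ r₁ r₂ : ℝ, 0 < r₁ → r₁ < r₂ → ∀ Ω : Set E, IsOpen Ω →
      closedAnnulus (r₁ / 2) (2 * r₂) ⊆ Ω → ∀ (u : E → ℝ) (G : E → E),
      (∀ x ∈ Ω, HasGradientAt u (G x) x) → LocallyLipschitzOn Ω G →
      ∀ S : E → E →L[ℝ] E, ContinuousOn S Ω →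
      (∀ᵐ x ∂μ, x ∈ annulus (r₁ / 2) (2 * r₂) → DifferentiableAt ℝ G x ∧
        0 ≤ (N - 2) * ⟪fderiv ℝ G x (G x), G x⟫ + (1 - 2 * δ) * divergence G x * ‖G x‖ ^ 2 +
          (N - 2) * δ * ‖G x‖ ^ 4 + ⟪S x (G x), G x⟫) →
      ∫ x in annulus r₁ r₂, ‖G x‖ ^ p * Real.exp (α * u x) ∂μ ≤
        C * ((∫ x in annulus (r₁ / 2) (2 * r₂), ‖S x‖ ^ (p / 2) * Real.exp (α * u x) ∂μ) +
          r₁ ^ (-p) * (∫ x in annulus (r₁ / 2) r₁, Real.exp (α * u x) ∂μ) +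
          r₂ ^ (-p) * ∫ x in annulus r₂ (2 * r₂), Real.exp (α * u x) ∂μ) := by
  have hδ' : 0 < 1 - 2 * δ := by linarith
  have hαd' : (N - 2) * δ = αd * (1 - 2 * δ) := by rw [hαd]; field_simp
  have hNp : N - 2 = (p - 2) * (1 - 2 * δ) := by rw [hp]; linarith
  have hp₂ : 2 < p := sub_pos.1 (pos_of_mul_pos_left (hNp ▸ sub_pos.2 hN) hδ'.le)
  obtain ⟨ε, rfl⟩ : ∃ ε, α = αd + 3 * ε := ⟨(α - αd) / 3, by ring⟩
  have hε : 0 < ε := by linarith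
  refine ⟨((1 - 2 * δ)⁻¹ / ε) ^ (p / 2) + (2 * (p / ε)) ^ p, by positivity,
    fun r₁ r₂ hr₁ hr Ω hΩ hrΩ u G hu hG S hS hcurv ↦
      dyadic_annulus_energy_estimate hp₂ (inv_nonneg.2 hδ'.le) hε
        le_rfl hr₁ hr.le hΩ hrΩ hu hG hS.norm (fun _ ↦ norm_nonneg _) ?_⟩
  filter_upwards [hcurv] with x hx hxA
  exact ⟨(hx hxA).1, neg_add_le_divergence_pFlux_comp hp₂ hδ hNp hαd' (hx hxA).1 (hx hxA).2⟩

end GradientEstimate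

theorem stmt_6 (n : ℕ) (hn : 3 ≤ n) (δ : ℝ) (hδ0 : 0 ≤ δ) (hδ : δ < 1/2)
    (αd p α : ℝ) (hαd : αd = ((n : ℝ) - 2) * δ / (1 - 2*δ)) (hp : p = n + 2*αd)
    (hα : αd < α) :
    ∃ C : ℝ, 0 < C ∧
      ∀ (r₁ r₂ : ℝ), 0 < r₁ → r₁ < r₂ →
      ∀ (Ω : Set (EuclideanSpace ℝ (Fin n))), IsOpen Ω →
        {x : EuclideanSpace ℝ (Fin n) | r₁/2 ≤ ‖x‖ ∧ ‖x‖ ≤ 2*r₂} ⊆ Ω →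
      ∀ (u : EuclideanSpace ℝ (Fin n) → ℝ)
        (G : EuclideanSpace ℝ (Fin n) → EuclideanSpace ℝ (Fin n)),
        (∀ y ∈ Ω, HasGradientAt u (G y) y) →
        (∀ y ∈ Ω, ∃ s ∈ nhds y, ∃ K, LipschitzOnWith K G s) →
      ∀ S : EuclideanSpace ℝ (Fin n) → EuclideanSpace ℝ (Fin n) →L[ℝ] EuclideanSpace ℝ (Fin n),
        ContinuousOn S Ω →
        (∀ y ∈ Ω, ∀ v w, ⟪S y v, w⟫ = ⟪v, S y w⟫) →
        (∀ᵐ x ∂volume, (r₁/2 < ‖x‖ ∧ ‖x‖ < 2*r₂) →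
          ∃ H : EuclideanSpace ℝ (Fin n) →L[ℝ] EuclideanSpace ℝ (Fin n),
            HasFDerivAt G H x ∧
            ∀ v, 0 ≤ ((n : ℝ) - 2) * ⟪H v, v⟫
              + (1 - 2*δ) * (LinearMap.trace ℝ _ H.toLinearMap) * ‖v‖^2
              + ((n : ℝ) - 2) * ⟪G x, v⟫^2
              - ((n : ℝ) - 2) * (1 - δ) * ‖G x‖^2 * ‖v‖^2
              + ⟪S x v, v⟫) →
        (∫ x in {y : EuclideanSpace ℝ (Fin n) | r₁ < ‖y‖ ∧ ‖y‖ < r₂},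
            ‖G x‖ ^ p * Real.exp (α * u x))
          ≤ C * ((∫ x in {y : EuclideanSpace ℝ (Fin n) | r₁/2 < ‖y‖ ∧ ‖y‖ < 2*r₂},
                ‖S x‖ ^ (p/2) * Real.exp (α * u x))
            + r₁ ^ (-p) * (∫ x in {y : EuclideanSpace ℝ (Fin n) | r₁/2 < ‖y‖ ∧ ‖y‖ < r₁},
                Real.exp (α * u x))
            + r₂ ^ (-p) * (∫ x in {y : EuclideanSpace ℝ (Fin n) | r₂ < ‖y‖ ∧ ‖y‖ < 2*r₂},
                Real.exp (α * u x))) := by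
  have hn' : (2 : ℝ) < n := by exact_mod_cast hn
  obtain ⟨C, hC, h⟩ := stmt_6_general (E := EuclideanSpace ℝ (Fin n)) volume hn' hδ hαd hp hα
  refine ⟨C, hC, fun r₁ r₂ hr₁ hr Ω hΩ hsub u G hu hG S hS _ hcurv ↦
    h r₁ r₂ hr₁ hr Ω hΩ hsub u G hu (fun y hy ↦ ?_) S hS ?_⟩
  · obtain ⟨s, hs, K, hK⟩ := hG y hy
    exact ⟨K, s, mem_nhdsWithin_of_mem_nhds hs, hK⟩
  · filter_upwards [hcurv] with x hx hxA
    obtain ⟨H, hH, hv⟩ := hx hxA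
    refine ⟨hH.differentiableAt, ?_⟩
    have hGx := hv (G x)
    rw [real_inner_self_eq_norm_sq] at hGx
    rw [divergence, hH.fderiv]
    linarith
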